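/- For every integer d ≥ 1 and every real m ∈ [0, 1], it holds that 1 − g_d(m) ≤ (p_d·2^d/(d+1))·(1 − m)^{d+1}. -/

import Mathlib

noncomputable def g (d : ℕ) : ℝ → ℝ :=
  fun m => ∑ i ∈ Finset.range (d + 1),
    (1 / 4 ^ i : ℝ) * (Nat.choose (2 * i) i) * (m * (1 - m ^ 2) ^ i)

noncomputable def p (d : ℕ) : ℝ :=
  ∑ i ∈ Finset.range (d + 1), (1 / 4 ^ i : ℝ) * (Nat.choose (2 * i) i)

noncomputable def cc (i : ℕ) : ℝ := (1 / 4 ^ i : ℝ) * (Nat.choose (2 * i) i)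

lemma cc_succ (d : ℕ) : 2 * ((d : ℝ) + 1) * cc (d + 1) = (2 * d + 1) * cc d := by
  have h := Nat.succ_mul_centralBinom_succ d
  simp only [Nat.centralBinom] at h
  have h' : ((d : ℝ) + 1) * (Nat.choose (2 * (d + 1)) (d + 1) : ℝ)
      = 2 * (2 * d + 1) * (Nat.choose (2 * d) d : ℝ) := by exact_mod_cast h
  unfold cc
  rw [pow_succ]
  field_simp
  linear_combination 2 * h'

lemma cc_nonneg (d : ℕ) : 0 ≤ cc d := by unfold cc; positivity

lemma p_eq (d : ℕ) : p d = (2 * d + 1) * cc d := by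
  induction d with
  | zero => simp [p, cc]
  | succ k ih =>
    have h : p (k + 1) = p k + cc (k + 1) := by
      simp only [p, cc]; rw [Finset.sum_range_succ]
    rw [h, ih, ← cc_succ]; push_cast; ring

lemma g_succ (d : ℕ) (m : ℝ) :
    g (d + 1) m = g d m + cc (d + 1) * (m * (1 - m ^ 2) ^ (d + 1)) := by
  simp only [g, cc]; rw [Finset.sum_range_succ]

lemma g_one (d : ℕ) : g d 1 = 1 := by
  induction d with
  | zero => simp [g]
  | succ k ih => rw [g_succ, ih]; simp

lemma g_deriv (d : ℕ) (m : ℝ) : HasDerivAt (g d) (p d * (1 - m ^ 2) ^ d) m := by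
  induction d with
  | zero =>
    have : g 0 = fun m => m := by funext x; simp [g]
    rw [this]; simpa [p] using hasDerivAt_id' m
  | succ k ih =>
    have : g (k + 1) = fun m => g k m + cc (k + 1) * (m * (1 - m ^ 2) ^ (k + 1)) := by
      funext x; exact g_succ k x
    rw [this]
    have h1 : HasDerivAt (fun x : ℝ => 1 - x ^ 2) (-(2 * m)) m := by
      simpa using (hasDerivAt_pow 2 m).const_sub 1
    have h2 := ih.fun_add (((hasDerivAt_id' m).fun_mul (h1.fun_pow (k + 1))).const_mul (cc (k + 1)))
    refine h2.congr_deriv ?_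
    rw [p_eq, p_eq, ← cc_succ]
    simp only [Nat.add_sub_cancel]
    push_cast
    ring

theorem stmt_5 (d : ℕ) (hd : 1 ≤ d) (m : ℝ) (hm : m ∈ Set.Icc (0 : ℝ) 1) :
    1 - g d m ≤ (p d * 2 ^ d / (d + 1)) * (1 - m) ^ (d + 1) := by
  have hp : 0 ≤ p d := by rw [p_eq]; have := cc_nonneg d; positivity
  have hF : ∀ x : ℝ, HasDerivAt
      (fun x => (p d * 2 ^ d / (d + 1)) * (1 - x) ^ (d + 1) - (1 - g d x))
      (p d * (1 - x ^ 2) ^ d - p d * (2 ^ d * (1 - x) ^ d)) x := by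
    intro x
    have h1 : HasDerivAt (fun x : ℝ => 1 - x) (-1) x := by
      simpa using (hasDerivAt_id' x).const_sub 1
    have h2 := ((h1.fun_pow (d + 1)).const_mul (p d * 2 ^ d / (d + 1))).fun_sub
      ((g_deriv d x).const_sub 1)
    refine h2.congr_deriv ?_
    have : (d : ℝ) + 1 ≠ 0 := by positivity
    simp only [Nat.add_sub_cancel]
    push_cast
    field_simp
    ring
  have hanti : AntitoneOn
      (fun x => (p d * 2 ^ d / (d + 1)) * (1 - x) ^ (d + 1) - (1 - g d x)) (Set.Icc 0 1) := by
    apply antitoneOn_of_deriv_nonpos (convex_Icc 0 1)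
    · exact fun x _ => (hF x).continuousAt.continuousWithinAt
    · exact fun x _ => (hF x).differentiableAt.differentiableWithinAt
    · intro x hx
      rw [interior_Icc] at hx
      rw [(hF x).deriv, ← mul_pow]
      have h3 : (1 - x ^ 2) ^ d ≤ (2 * (1 - x)) ^ d := by
        apply pow_le_pow_left₀ <;> nlinarith [hx.1, hx.2]
      have := mul_le_mul_of_nonneg_left h3 hp
      linarith
  have h := hanti hm (Set.right_mem_Icc.2 zero_le_one) hm.2
  simp only [g_one, sub_self] at h
  rw [zero_pow (Nat.succ_ne_zero d)] at h
  linarith
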